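/- arXiv:2403.06270 — 2 statements merged into one kernel-verified Lean document; each statement's English description precedes it below -/
import Mathlib

section
/- Let n ≥ 1 and f ∈ k⟨x_1,…,x_d⟩. If det f(X) = 0 for every X ∈ M_n(k)^d (i.e. f takes only singular values on n×n matrix tuples), then f(X) = 0 for every X ∈ M_n(k)^d (i.e. f is a polynomial identity of n×n matrices). -/
/-- Evaluation of a noncommutative polynomial at a tuple of `n × n` matrices. -/
noncomputable def ncEval {k : Type*} [CommSemiring k] {d n : ℕ}
    (X : Fin d → Matrix (Fin n) (Fin n) k) (f : FreeAlgebra k (Fin d)) :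
    Matrix (Fin n) (Fin n) k :=
  FreeAlgebra.lift k X f

open Polynomial in
/-- Scaling of the inner variable `a ↦ c a`. -/
noncomputable def scA {k : Type*} [Field k] (c : k) : k[X][X] →+* k[X][X] :=
  mapRingHom (compRingHom (C c * X))

open Polynomial in
/-- Scaling of the outer variable `b ↦ c b`. -/
noncomputable def scB {k : Type*} [Field k] (c : k) : k[X][X] →+* k[X][X] :=
  compRingHom (C (C c) * X)

open Polynomial in
/-- The generic cyclic algebra inside matrices over `k[a][b]`. -/
def InCyc {k : Type*} [Field k] {m : ℕ} (ω : k) (w : Fin (m+1) → k)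
    (g : Matrix (Fin (m+1)) (Fin (m+1)) k[X][X]) : Prop :=
  (∀ r i l, g (i + r) (l + r) = scA (w r) (g i l)) ∧
  (∀ i l, scB ω (g i l) * C (C (w i)) = C (C (w l)) * g i l)

open Polynomial in
theorem InCyc.add {k : Type*} [Field k] {m : ℕ} {ω : k} {w : Fin (m+1) → k}
    {g h : Matrix (Fin (m+1)) (Fin (m+1)) k[X][X]} (hg : InCyc ω w g) (hh : InCyc ω w h) :
    InCyc ω w (g + h) := by
  refine ⟨fun r i l => ?_, fun i l => ?_⟩
  · simp [hg.1 r i l, hh.1 r i l]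
  · have := hg.2 i l
    have := hh.2 i l
    simp only [Matrix.add_apply, map_add, add_mul, mul_add, *]

open Polynomial in
theorem InCyc.mul {k : Type*} [Field k] {m : ℕ} {ω : k} {w : Fin (m+1) → k}
    {g h : Matrix (Fin (m+1)) (Fin (m+1)) k[X][X]} (hg : InCyc ω w g) (hh : InCyc ω w h) :
    InCyc ω w (g * h) := by
  refine ⟨fun r i l => ?_, fun i l => ?_⟩
  · rw [Matrix.mul_apply, Matrix.mul_apply, map_sum, ← Equiv.sum_comp (Equiv.addRight r)]
    refine Finset.sum_congr rfl fun x _ => ?_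
    rw [map_mul, ← hg.1, ← hh.1]
    rfl
  · rw [Matrix.mul_apply, map_sum, Finset.sum_mul, Finset.mul_sum]
    refine Finset.sum_congr rfl fun x _ => ?_
    rw [map_mul]
    linear_combination scB ω (h x l) * hg.2 i x + g i x * hh.2 x l

open Polynomial in
theorem InCyc.scalar {k : Type*} [Field k] {m : ℕ} {ω : k} {w : Fin (m+1) → k} (c : k) :
    InCyc ω w (algebraMap k (Matrix (Fin (m+1)) (Fin (m+1)) k[X][X]) c) := by
  have e : algebraMap k k[X][X] c = C (C c) := rfl
  refine ⟨fun r i l => ?_, fun i l => ?_⟩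
  · by_cases hil : i = l
    · subst hil; simp [Matrix.algebraMap_matrix_apply, e, scA]
    · simp [Matrix.algebraMap_matrix_apply, hil]
  · by_cases hil : i = l
    · subst hil; simp only [Matrix.algebraMap_matrix_apply, e, scB, if_true, coe_compRingHom_apply, C_comp]; ring
    · simp [Matrix.algebraMap_matrix_apply, hil]

open Polynomial in
theorem InCyc.lift {k : Type*} [Field k] {m d : ℕ} {ω : k} {w : Fin (m+1) → k}
    (Y : Fin d → Matrix (Fin (m+1)) (Fin (m+1)) k[X][X]) (hY : ∀ i, InCyc ω w (Y i))
    (f : FreeAlgebra k (Fin d)) : InCyc ω w (FreeAlgebra.lift k Y f) := by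
  induction f using FreeAlgebra.induction with
  | grade0 c => rw [AlgHom.commutes]; exact InCyc.scalar c
  | grade1 i => rw [FreeAlgebra.lift_ι_apply]; exact hY i
  | mul a b ha hb => rw [map_mul]; exact ha.mul hb
  | add a b ha hb => rw [map_add]; exact ha.add hb

open Polynomial in
theorem InCyc.det_ne_zero {k : Type*} [Field k] {m : ℕ} {ω : k} {w : Fin (m+1) → k}
    (hw0 : ∀ i, w i ≠ 0) (hwi : Function.Injective w)
    (hwadd : ∀ i j, w (i + j) = w i * w j)
    {g : Matrix (Fin (m+1)) (Fin (m+1)) k[X][X]} (hg : InCyc ω w g) (h0 : g ≠ 0) :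
    g.det ≠ 0 := by
  classical
  -- maximal degree
  obtain ⟨⟨i₀, l₀⟩, -, hmax⟩ := Finset.exists_max_image
    (Finset.univ : Finset (Fin (m+1) × Fin (m+1))) (fun p => (g p.1 p.2).degree) ⟨(0,0), by simp⟩
  have hne : g i₀ l₀ ≠ 0 := by
    intro h
    apply h0
    ext1 i l
    have := hmax (i, l) (by simp)
    simpa [h] using this
  set N := (g i₀ l₀).natDegree with hN
  have hdeg : ∀ i l, (g i l).natDegree ≤ N := fun i l =>
    natDegree_le_natDegree (hmax (i, l) (by simp))
  have hlead : (g i₀ l₀).coeff N ≠ 0 := by simpa [hN] using hne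
  -- support of the coefficient matrix
  have hsupp : ∀ i l, (g i l).coeff N ≠ 0 → w l = ω ^ N * w i := by
    intro i l hc
    have := congrArg (fun p => p.coeff N) (hg.2 i l)
    simp only [scB, coe_compRingHom_apply, coeff_mul_C, coeff_C_mul, comp_C_mul_X_coeff] at this
    have h2 : (g i l).coeff N * (C (ω ^ N * w i) - C (w l)) = 0 := by
      rw [C_mul, C_pow]; linear_combination this
    rcases mul_eq_zero.1 h2 with h | h
    · exact absurd h hc
    · exact (C_injective (sub_eq_zero.1 h)).symm
  have hrow : ∀ r, (g (i₀ + r) (l₀ + r)).coeff N ≠ 0 := by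
    intro r
    rw [hg.1]
    simp only [scA, coe_mapRingHom, coeff_map, coe_compRingHom_apply]
    intro h
    apply hlead
    ext t
    have := congrArg (fun p => p.coeff t) h
    simpa [comp_C_mul_X_coeff, hw0 r] using this
  set G : Matrix (Fin (m+1)) (Fin (m+1)) k[X] := fun i l => (g i l).coeff N with hG
  have hdet : g.det.coeff ((Finset.univ : Finset (Fin (m+1))).card * N) = G.det := by
    rw [Matrix.det_apply', Matrix.det_apply', finsetSum_coeff]
    refine Finset.sum_congr rfl fun σ _ => ?_
    rw [← coeff_prod_of_natDegree_le _ _ N (fun p _ => hdeg _ _)]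
    rw [← Polynomial.C_eq_intCast, coeff_C_mul]
  have hGd : G.submatrix id (Equiv.addRight (l₀ - i₀)) =
      Matrix.diagonal (fun i => G i (i + (l₀ - i₀))) := by
    ext1 i l
    by_cases hil : i = l
    · subst hil; simp
    · rw [Matrix.diagonal_apply_ne _ hil]
      by_contra hc
      have h1 : w (l + (l₀ - i₀)) = ω ^ N * w i := hsupp _ _ hc
      have h2 := hsupp _ _ (hrow (i - i₀))
      apply hil
      have h3 : i₀ + (i - i₀) = i := by abel
      rw [h3, ← h1] at h2
      have := hwi h2
      have h4 : l₀ + (i - i₀) = i + (l₀ - i₀) := by abel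
      rw [h4] at this
      exact add_right_cancel this
  intro hz
  rw [hz, coeff_zero] at hdet
  have h5 := Matrix.det_permute' (Equiv.addRight (l₀ - i₀)) G
  rw [hGd, ← hdet, mul_zero, Matrix.det_diagonal, Finset.prod_eq_zero_iff] at h5
  obtain ⟨i, -, hi⟩ := h5
  apply hrow (i - i₀)
  have h3 : i₀ + (i - i₀) = i := by abel
  have h4 : l₀ + (i - i₀) = i + (l₀ - i₀) := by abel
  rw [h3, h4]
  exact hi

open Polynomial in
/-- Every matrix lifts to the generic cyclic algebra. -/
theorem exists_cyc_lift {k : Type*} [Field k] {m : ℕ} {ω : k} {w : Fin (m+1) → k}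
    (hw : ∀ i, w i = ω ^ (i : ℕ)) (hwi : Function.Injective w)
    (hwadd : ∀ i j, w (i + j) = w i * w j)
    (Y : Matrix (Fin (m+1)) (Fin (m+1)) k) :
    ∃ g, InCyc ω w g ∧ ∀ i l, aevalAeval (R := k) (1 : k) 1 (g i l) = Y i l := by
  classical
  let p : Fin (m+1) → k[X] := fun s => Lagrange.interpolate Finset.univ w (fun i => Y i (i + s))
  have hp : ∀ s i, (p s).eval (w i) = Y i (i + s) := fun s i =>
    Lagrange.eval_interpolate_at_node _ hwi.injOn (Finset.mem_univ i)
  refine ⟨fun i l => C ((p (l - i)).comp (C (w i) * X)) * X ^ ((l - i : Fin (m+1)) : ℕ),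
    ⟨fun r i l => ?_, fun i l => ?_⟩, fun i l => ?_⟩
  · have : l + r - (i + r) = l - i := by abel
    simp only [this]
    simp [scA, comp_assoc, hwadd, mul_assoc]
  · have h1 : w l = ω ^ ((l - i : Fin (m+1)) : ℕ) * w i := by
      rw [← hw, ← hwadd]; congr 1; abel
    simp only [scB, coe_compRingHom_apply, mul_comp, C_comp, X_pow_comp, mul_pow]
    rw [h1, C_mul, C_mul, C_pow, C_pow]
    ring
  · have : i + (l - i) = l := by abel
    simp [aevalAeval, eval_comp, hp, this, aeval_def]

open Polynomial in
theorem exists_eval_ne {k : Type*} [Field k] [Infinite k] (q : k[X][X]) (hq : q ≠ 0) :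
    ∃ a b : k, aevalAeval (R := k) a b q ≠ 0 := by
  by_contra! hc
  apply hq
  apply Polynomial.eq_zero_of_infinite_isRoot
  refine Set.Infinite.mono ?_ (Set.infinite_range_of_injective (C_injective (R := k)))
  rintro _ ⟨b, rfl⟩
  refine Polynomial.funext fun a => ?_
  have := hc a b
  rw [coe_aevalAeval_eq_evalEval] at this
  simpa [evalEval] using this

/-- If a noncommutative polynomial takes only singular values on `n × n` matrix
tuples, then it is a polynomial identity of `n × n` matrices. -/
theorem singular_values_imp_identity
    (k : Type*) [Field k] [IsAlgClosed k] [CharZero k]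
    (d n : ℕ) (hd : 1 ≤ d) (hn : 1 ≤ n) (f : FreeAlgebra k (Fin d))
    (h : ∀ X : Fin d → Matrix (Fin n) (Fin n) k, (ncEval X f).det = 0) :
    ∀ X : Fin d → Matrix (Fin n) (Fin n) k, ncEval X f = 0 := by
  intro Y
  obtain ⟨m, rfl⟩ : ∃ m, n = m + 1 := ⟨n - 1, by omega⟩
  obtain ⟨ω, hω⟩ := HasEnoughRootsOfUnity.exists_primitiveRoot k (m + 1)
  let w : Fin (m+1) → k := fun i => ω ^ (i : ℕ)
  have hω0 : ω ≠ 0 := hω.ne_zero (by omega)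
  have hwi : Function.Injective w := fun i j hij => Fin.ext (hω.pow_inj i.2 j.2 hij)
  have hwadd : ∀ i j, w (i + j) = w i * w j := by
    intro i j
    simp only [w, Fin.val_add, ← pow_add]
    exact (pow_eq_pow_mod _ hω.pow_eq_one).symm
  choose g hg hgY using fun i => exists_cyc_lift (fun _ => rfl) hwi hwadd (Y i)
  -- naturality
  have nat : ∀ a b : k, (Polynomial.aevalAeval (R := k) a b).mapMatrix
      (FreeAlgebra.lift k g f) =
      ncEval (fun i => (Polynomial.aevalAeval (R := k) a b).mapMatrix (g i)) f := by
    intro a b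
    have : ((Polynomial.aevalAeval (R := k) a b).mapMatrix).comp (FreeAlgebra.lift k g) =
      FreeAlgebra.lift k (fun i => (Polynomial.aevalAeval (R := k) a b).mapMatrix (g i)) := by
      ext1; funext i; simp
    exact congrArg (fun φ => φ f) this
  by_contra hne
  have h0 : FreeAlgebra.lift k g f ≠ 0 := by
    intro hz
    apply hne
    have := nat 1 1
    rw [hz, map_zero] at this
    rw [this]
    congr 1
    funext i
    ext1 r s
    exact (hgY i r s).symm
  have hdet := (InCyc.lift g hg f).det_ne_zero (fun i => pow_ne_zero _ hω0) hwi hwadd h0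
  obtain ⟨a, b, hab⟩ := exists_eval_ne _ hdet
  apply hab
  rw [AlgHom.map_det, nat]
  exact h _
end

section
/- Let f ∈ k⟨x_1,…,x_d⟩ be nonconstant (i.e. f ∉ k·1). Then there exists n_0 ∈ ℕ such that for every n ≥ n_0 there is a tuple X ∈ M_n(k)^d for which the matrix f(X) has n pairwise distinct eigenvalues. -/
open Polynomial in
theorem aux_root_iff {k : Type*} [Field k] {n : ℕ} (M : Matrix (Fin n) (Fin n) k) (t : k) :
    M.charpoly.IsRoot t ↔ ∃ v : Fin n → k, v ≠ 0 ∧ M.mulVec v = t • v := by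
  rw [IsRoot.def, Matrix.eval_charpoly, ← Matrix.exists_mulVec_eq_zero_iff]
  refine exists_congr fun v => and_congr Iff.rfl ?_
  rw [Matrix.sub_mulVec, sub_eq_zero, Matrix.scalar_apply, ← Matrix.smul_one_eq_diagonal,
    Matrix.smul_mulVec, Matrix.one_mulVec]
  exact eq_comm

open Polynomial in
/-- distinct eigenvalues iff separable characteristic polynomial -/
theorem aux_sep_iff {k : Type*} [Field k] [IsAlgClosed k] {n : ℕ}
    (M : Matrix (Fin n) (Fin n) k) :
    M.charpoly.Separable ↔ ∃ mu : Fin n → k, Function.Injective mu ∧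
          ∀ i : Fin n, ∃ v : Fin n → k, v ≠ 0 ∧ M.mulVec v = mu i • v := by
  classical
  have hne : M.charpoly ≠ 0 := M.charpoly_monic.ne_zero
  have hcard : M.charpoly.roots.card = n := by
    rw [IsAlgClosed.card_roots_eq_natDegree, Matrix.charpoly_natDegree_eq_dim, Fintype.card_fin]
  rw [← nodup_roots_iff_of_splits hne (IsAlgClosed.splits _)]
  constructor
  · intro h
    have hc : M.charpoly.roots.toFinset.card = n := by
      rw [Multiset.toFinset_card_of_nodup h, hcard]
    let e := (M.charpoly.roots.toFinset.equivFinOfCardEq hc).symm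
    refine ⟨fun i => (e i : k), fun i j hij => e.injective (Subtype.ext hij), fun i => ?_⟩
    rw [← aux_root_iff]
    have := (e i).2
    rw [Multiset.mem_toFinset, mem_roots hne] at this
    exact this
  · rintro ⟨mu, hinj, hv⟩
    have hsub : (Finset.univ.image mu) ⊆ M.charpoly.roots.toFinset := by
      intro x hx
      obtain ⟨i, -, rfl⟩ := Finset.mem_image.1 hx
      rw [Multiset.mem_toFinset, mem_roots hne, aux_root_iff]
      exact hv i
    have h1 := Finset.card_le_card hsub
    rw [Finset.card_image_of_injective _ hinj, Finset.card_univ, Fintype.card_fin] at h1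
    rw [← Multiset.dedup_card_eq_card_iff_nodup]
    have h2 : M.charpoly.roots.dedup.card ≤ M.charpoly.roots.card :=
      Multiset.card_le_card (Multiset.dedup_le _)
    change n ≤ M.charpoly.roots.dedup.card at h1
    omega

open Polynomial in
theorem aux_res {k : Type*} [Field k] [CharZero k] {n : ℕ}
    (M : Matrix (Fin n) (Fin n) k) :
    resultant M.charpoly (derivative M.charpoly) n (n-1) ≠ 0 ↔ M.charpoly.Separable := by
  have h1 : M.charpoly.natDegree = n := by
    rw [Matrix.charpoly_natDegree_eq_dim, Fintype.card_fin]
  have h2 : (derivative M.charpoly).natDegree = n - 1 := by rw [natDegree_derivative, h1]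
  have := @resultant_eq_zero_iff k _ M.charpoly (derivative M.charpoly)
  rw [h1, h2] at this
  have hne : M.charpoly ≠ 0 := M.charpoly_monic.ne_zero
  rw [Ne, this, Separable]
  simp [hne]

open Polynomial in
theorem aux_perturb {k : Type*} [Field k] [IsAlgClosed k] [CharZero k] {n : ℕ}
    (F : Matrix (Fin n) (Fin n) k[X]) (h : (F.map (evalRingHom (0:k))).charpoly.Separable) :
    ∃ s : k, s ≠ 0 ∧ (F.map (evalRingHom s)).charpoly.Separable := by
  set R := resultant F.charpoly (derivative F.charpoly) n (n-1) with hR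
  have key : ∀ s : k, (F.map (evalRingHom s)).charpoly.Separable ↔ eval s R ≠ 0 := by
    intro s
    rw [← aux_res, Matrix.charpoly_map, derivative_map, resultant_map_map]
    rfl
  rw [key] at h
  have hR0 : R ≠ 0 := by
    intro h0; rw [h0] at h; simp at h
  have hX : X * R ≠ 0 := mul_ne_zero X_ne_zero hR0
  by_contra hcon
  push Not at hcon
  apply hX
  apply Polynomial.funext
  intro s
  by_cases hs : s = 0
  · simp [hs]
  · have := hcon s hs
    rw [key, not_not] at this
    simp [this]

/-- evaluation of a linear combination of words -/
noncomputable def wEval {k : Type*} [Field k] {d : ℕ} {ι : Type*} [Fintype ι] [DecidableEq ι]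
    (T : Finset (List (Fin d))) (c : List (Fin d) → k) (X : Fin d → Matrix ι ι k) :
    Matrix ι ι k := ∑ w ∈ T, c w • (w.map X).prod

def WGood {k : Type*} [Field k] {d : ℕ}
    (T : Finset (List (Fin d))) (c : List (Fin d) → k) (ι : Type) [Fintype ι] [DecidableEq ι] :
    Prop :=
  ∃ X : Fin d → Matrix ι ι k, ∃ mu : ι → k, Function.Injective mu ∧ (∀ i, mu i ≠ 0) ∧
    ∀ i, ∃ v : ι → k, v ≠ 0 ∧ (wEval T c X).mulVec v = mu i • v

theorem WGood.equiv {k : Type*} [Field k] {d : ℕ}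
    {T : Finset (List (Fin d))} {c : List (Fin d) → k} {ι κ : Type} [Fintype ι] [DecidableEq ι]
    [Fintype κ] [DecidableEq κ] (e : ι ≃ κ) (h : WGood T c ι) : WGood T c κ := by
  obtain ⟨X, mu, hinj, h0, hv⟩ := h
  have hE : wEval T c (fun i => Matrix.reindexAlgEquiv k k e (X i))
      = Matrix.reindexAlgEquiv k k e (wEval T c X) := by
    simp only [wEval, map_sum, map_smul]
    refine Finset.sum_congr rfl fun w _ => ?_
    rw [map_list_prod, List.map_map]
    rfl
  refine ⟨fun i => Matrix.reindexAlgEquiv k k e (X i), mu ∘ e.symm,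
    hinj.comp e.symm.injective, fun i => h0 _, fun i => ?_⟩
  obtain ⟨v, hv0, hv⟩ := hv (e.symm i)
  refine ⟨v ∘ e.symm, ?_, ?_⟩
  · intro h
    apply hv0
    funext j
    have := congrFun h (e j)
    simpa using this
  · rw [hE, Matrix.coe_reindexAlgEquiv, Matrix.reindex_apply, Matrix.submatrix_mulVec_equiv]
    simp only [Equiv.symm_symm, Function.comp_assoc, Equiv.symm_comp_self, Function.comp_id, hv]
    rfl

theorem wEval_smul {k : Type*} [Field k] {d : ℕ} {ι : Type*} [Fintype ι] [DecidableEq ι]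
    (T : Finset (List (Fin d))) (c : List (Fin d) → k) (X : Fin d → Matrix ι ι k) (s : k) :
    wEval T c (fun i => s • X i) = ∑ w ∈ T, (c w * s ^ w.length) • (w.map X).prod := by
  refine Finset.sum_congr rfl fun w hw => ?_
  rw [mul_smul]
  congr 1
  clear hw
  induction w with
  | nil => simp
  | cons a w ih =>
    simp only [List.map_cons, List.prod_cons, ih, List.length_cons, pow_succ']
    rw [smul_mul_smul_comm]

theorem wEval_blocks {k : Type*} [Field k] {d : ℕ} {ι κ : Type*} [Fintype ι] [DecidableEq ι]
    [Fintype κ] [DecidableEq κ]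
    (T : Finset (List (Fin d))) (c : List (Fin d) → k) (X : Fin d → Matrix ι ι k)
    (Y : Fin d → Matrix κ κ k) :
    wEval T c (fun i => Matrix.fromBlocks (X i) 0 0 (Y i)) =
      Matrix.fromBlocks (wEval T c X) 0 0 (wEval T c Y) := by
  have hw : ∀ w : List (Fin d), (w.map (fun i => Matrix.fromBlocks (X i) 0 0 (Y i))).prod =
      Matrix.fromBlocks (w.map X).prod 0 0 (w.map Y).prod := by
    intro w
    induction w with
    | nil => simp
    | cons a w ih => simp [ih, Matrix.fromBlocks_multiply]
  unfold wEval
  induction T using Finset.induction_on with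
  | empty => simp
  | insert a s ha ih =>
    rw [Finset.sum_insert ha, Finset.sum_insert ha, Finset.sum_insert ha, ih, hw,
      Matrix.fromBlocks_smul, Matrix.fromBlocks_add]
    simp

open Polynomial in
theorem WGood.sum {k : Type*} [Field k] [CharZero k] {d : ℕ}
    {T : Finset (List (Fin d))} {c : List (Fin d) → k} {ι κ : Type} [Fintype ι] [DecidableEq ι]
    [Fintype κ] [DecidableEq κ] {m : ℕ} (hm : 1 ≤ m) (hT : ∀ w ∈ T, w.length = m)
    (h : WGood T c ι) (h' : WGood T c κ) : WGood T c (ι ⊕ κ) := by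
  obtain ⟨X, mu, hinj, h0, hv⟩ := h
  obtain ⟨Y, nu, hinj', h0', hv'⟩ := h'
  obtain ⟨s, hs0, hs⟩ : ∃ s : k, s ≠ 0 ∧ ∀ i j, s ^ m * nu j ≠ mu i := by
    set P : k[X] := Polynomial.X * ∏ i, ∏ j, (Polynomial.X ^ m * C (nu j) - C (mu i)) with hP
    have hP0 : P ≠ 0 := by
      refine mul_ne_zero X_ne_zero (Finset.prod_ne_zero_iff.2 fun i _ =>
        Finset.prod_ne_zero_iff.2 fun j _ => ?_)
      intro h
      have := congrArg (eval 0) h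
      simp [show m ≠ 0 by omega] at this
      exact h0 i this
    by_contra hcon
    push Not at hcon
    apply hP0
    apply Polynomial.funext
    intro s
    by_cases hs : s = 0
    · simp [hP, hs]
    · obtain ⟨i, j, hij⟩ := hcon s hs
      rw [hP, eval_mul, eval_prod, Finset.prod_eq_zero (Finset.mem_univ i)]
      · simp
      · rw [eval_prod, Finset.prod_eq_zero (Finset.mem_univ j)]
        simp only [eval_sub, eval_mul, eval_pow, eval_X, eval_C, hij, sub_self]
  have hY : wEval T c (fun i => s • Y i) = s ^ m • wEval T c Y := by
    rw [wEval_smul, wEval, Finset.smul_sum]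
    refine Finset.sum_congr rfl fun w hw => ?_
    rw [hT w hw, mul_comm, mul_smul]
  refine ⟨fun i => Matrix.fromBlocks (X i) 0 0 (s • Y i), Sum.elim mu (fun j => s ^ m * nu j),
    ?_, ?_, ?_⟩
  · refine hinj.sumElim ?_ ?_
    · intro a b hab
      exact hinj' (mul_left_cancel₀ (pow_ne_zero m hs0) hab)
    · intro a b
      exact (hs a b).symm
  · rintro (i | j)
    · exact h0 i
    · exact mul_ne_zero (pow_ne_zero m hs0) (h0' j)
  · rw [wEval_blocks, hY]
    rintro (i | j)
    · obtain ⟨v, hv0, hv⟩ := hv i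
      refine ⟨Sum.elim v 0, ?_, ?_⟩
      · intro h
        apply hv0
        funext x
        exact congrFun h (Sum.inl x)
      · rw [Matrix.fromBlocks_mulVec]
        funext x
        rcases x with x | x <;> simp [hv]
    · obtain ⟨v, hv0, hv⟩ := hv' j
      refine ⟨Sum.elim 0 v, ?_, ?_⟩
      · intro h
        apply hv0
        funext x
        exact congrFun h (Sum.inr x)
      · rw [Matrix.fromBlocks_mulVec]
        funext x
        rcases x with x | x <;> simp [hv, Matrix.smul_mulVec, mul_assoc]

/-- weight of a word along a cycle -/
def wWt {R : Type*} [CommRing R] {d n : ℕ} (a : Fin d → ZMod n → R) :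
    List (Fin d) → ZMod n → R
  | [], _ => 1
  | i :: w, j => a i j * wWt a w (j + 1)

theorem wWt_map {R S : Type*} [CommRing R] [CommRing S] {d n : ℕ} (φ : R →+* S)
    (a : Fin d → ZMod n → R) (w : List (Fin d)) (j : ZMod n) :
    φ (wWt a w j) = wWt (fun i j => φ (a i j)) w j := by
  induction w generalizing j with
  | nil => simp [wWt]
  | cons i w ih => simp [wWt, ih]

theorem wWt_ind {k : Type*} [Field k] {d n : ℕ} [NeZero n] (w0 : List (Fin d))
    (hn : w0.length ≤ n) (j0 : ZMod n) (w : List (Fin d)) (t : ℕ)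
    (ht : w.length + t = w0.length) :
    wWt (fun i j => if w0[(j - j0).val]? = some i then (1:k) else 0) w (j0 + (t : ZMod n)) =
      if w = w0.drop t then 1 else 0 := by
  induction w generalizing t with
  | nil =>
    have : w0.drop t = [] := by
      rw [List.drop_eq_nil_iff]; simp at ht; omega
    simp [wWt, this]
  | cons i w ih =>
    simp only [List.length_cons] at ht
    have ht' : t < w0.length := by omega
    have h1 := ih (t + 1) (by omega)
    rw [List.drop_eq_getElem_cons ht']
    simp only [wWt]
    rw [show j0 + (t : ZMod n) + 1 = j0 + ((t + 1 : ℕ) : ZMod n) by push_cast; ring, h1]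
    rw [add_sub_cancel_left, ZMod.val_natCast_of_lt (by omega), List.getElem?_eq_getElem ht']
    simp only [List.cons.injEq, Option.some.injEq]
    by_cases hi : w0[t] = i
    · simp [hi]
    · rw [if_neg hi, zero_mul, if_neg (fun h => hi h.1.symm)]

/-- weighted shift -/
def wShift {k : Type*} [Field k] {d n : ℕ} (a : Fin d → ZMod n → k) (i : Fin d) :
    Matrix (ZMod n) (ZMod n) k := Matrix.of fun j j' => if j' = j + 1 then a i j else 0

theorem wShift_word {k : Type*} [Field k] {d n : ℕ} [NeZero n] (a : Fin d → ZMod n → k)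
    (w : List (Fin d)) (v : ZMod n → k) (j : ZMod n) :
    ((w.map (wShift a)).prod.mulVec v) j = wWt a w j * v (j + (w.length : ZMod n)) := by
  induction w generalizing j with
  | nil => simp [wWt]
  | cons i w ih =>
    rw [List.map_cons, List.prod_cons, ← Matrix.mulVec_mulVec]
    have : ∀ u : ZMod n → k, (wShift a i).mulVec u j = a i j * u (j + 1) := by
      intro u
      simp [wShift, Matrix.mulVec, dotProduct]
    rw [this, ih, wWt, List.length_cons]
    push_cast
    rw [mul_assoc, add_assoc, add_comm (1 : ZMod n)]

theorem WGood.cyc {k : Type*} [Field k] [IsAlgClosed k] [CharZero k] {d : ℕ}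
    {T : Finset (List (Fin d))} {c : List (Fin d) → k} {m : ℕ}
    (hT : ∀ w ∈ T, w.length = m) (hc : ∀ w ∈ T, c w ≠ 0) (hne : T.Nonempty)
    (n : ℕ) [NeZero n] (hmn : m ≤ n) (hco : m.Coprime n) : WGood T c (ZMod n) := by
  classical
  obtain ⟨w0, hw0⟩ := hne
  -- find weights
  obtain ⟨a, ha⟩ : ∃ a : Fin d → ZMod n → k, ∀ j, ∑ w ∈ T, c w * wWt a w j ≠ 0 := by
    let G : ZMod n → MvPolynomial (Fin d × ZMod n) k := fun j =>
      ∑ w ∈ T, MvPolynomial.C (c w) * wWt (fun i j => MvPolynomial.X (i, j)) w j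
    have hG : ∀ (a : Fin d → ZMod n → k) j, MvPolynomial.eval (fun p => a p.1 p.2) (G j) =
        ∑ w ∈ T, c w * wWt a w j := by
      intro a j
      simp [G, map_sum, wWt_map]
    have hG0 : ∀ j, G j ≠ 0 := by
      intro j h
      have h1 := hG (fun i j' => if w0[(j' - j).val]? = some i then (1:k) else 0) j
      rw [h, map_zero] at h1
      have h2 : ∀ w ∈ T, wWt (fun i j' => if w0[(j' - j).val]? = some i then (1:k) else 0) w j
          = if w = w0 then 1 else 0 := by
        intro w hw
        have := wWt_ind (k := k) w0 (by rw [hT w0 hw0]; exact hmn) j w 0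
          (by rw [hT w hw, hT w0 hw0]; rfl)
        simpa using this
      rw [Finset.sum_congr rfl (fun w hw => by rw [h2 w hw])] at h1
      simp [hw0] at h1
      exact hc w0 hw0 h1.symm
    have hP : ∏ j, G j ≠ 0 := Finset.prod_ne_zero_iff.2 fun j _ => hG0 j
    by_contra hcon
    push Not at hcon
    apply hP
    apply MvPolynomial.funext
    intro x
    obtain ⟨j, hj⟩ := hcon (fun i j => x (i, j))
    rw [← hG] at hj
    rw [map_prod, Finset.prod_eq_zero (Finset.mem_univ j) hj, map_zero]
  set g : ZMod n → k := fun j => ∑ w ∈ T, c w * wWt a w j with hg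
  set M := wEval T c (wShift a) with hM
  have hMv : ∀ v j, M.mulVec v j = g j * v (j + (m : ZMod n)) := by
    intro v j
    rw [hM, wEval, Matrix.sum_mulVec, Finset.sum_apply, hg, Finset.sum_mul]
    refine Finset.sum_congr rfl fun w hw => ?_
    rw [Matrix.smul_mulVec, Pi.smul_apply, wShift_word, hT w hw, smul_eq_mul, mul_assoc]
  obtain ⟨lam, hlam⟩ := Module.End.exists_eigenvalue (Matrix.toLin' M)
  obtain ⟨v, hv⟩ := hlam.exists_hasEigenvector
  have hv0 : v ≠ 0 := hv.2
  have hv1 : M.mulVec v = lam • v := by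
    have := hv.apply_eq_smul
    rwa [Matrix.toLin'_apply] at this
  have hl0 : lam ≠ 0 := by
    intro h
    apply hv0
    funext j
    have := congrFun hv1 (j - (m : ZMod n))
    rw [hMv, h] at this
    rw [zero_smul, sub_add_cancel, Pi.zero_apply] at this
    exact (mul_eq_zero.1 this).resolve_left (ha _)
  obtain ⟨ζ, hζ⟩ := HasEnoughRootsOfUnity.exists_primitiveRoot k n
  have hζm := hζ.pow_of_coprime m hco
  have hζ0 : ζ ≠ 0 := hζ.ne_zero (NeZero.ne n)
  have hshift : ∀ j : ZMod n, ζ ^ (j + (m : ZMod n)).val = ζ ^ j.val * ζ ^ m := by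
    intro j
    rw [← pow_add, ZMod.val_add, ZMod.val_natCast, Nat.add_mod_mod]
    exact (pow_eq_pow_mod _ hζ.pow_eq_one).symm
  refine ⟨wShift a, fun t => (ζ ^ m) ^ t.val * lam, ?_, ?_, ?_⟩
  · intro s t hst
    have := mul_right_cancel₀ hl0 hst
    exact ZMod.val_injective n (hζm.pow_inj (ZMod.val_lt s) (ZMod.val_lt t) this)
  · intro t
    exact mul_ne_zero (pow_ne_zero _ (pow_ne_zero _ hζ0)) hl0
  · intro t
    refine ⟨fun j => (ζ ^ j.val) ^ t.val * v j, ?_, ?_⟩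
    · intro h
      apply hv0
      funext j
      have := congrFun h j
      simpa [hζ0] using this
    · funext j
      have h1 := congrFun hv1 j
      rw [hMv] at h1
      rw [← hM, hMv, hshift]
      simp only [Pi.smul_apply, smul_eq_mul] at h1 ⊢
      rw [mul_pow]
      linear_combination (ζ ^ j.val) ^ t.val * (ζ ^ m) ^ t.val * h1

theorem WGood.all {k : Type*} [Field k] [IsAlgClosed k] [CharZero k] {d : ℕ}
    {T : Finset (List (Fin d))} {c : List (Fin d) → k} {m : ℕ} (hm : 1 ≤ m)
    (hT : ∀ w ∈ T, w.length = m) (hc : ∀ w ∈ T, c w ≠ 0) (hne : T.Nonempty)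
    (n : ℕ) (hn : m * m + 1 ≤ n) : WGood T c (Fin n) := by
  have h1 : ∀ q, WGood T c (Fin (m * (q + 1) + 1)) := by
    intro q
    have : WGood T c (ZMod (m * (q + 1) + 1)) := by
      refine WGood.cyc hT hc hne _ (by nlinarith) ?_
      simp
    exact this.equiv (ZMod.finEquiv _).symm.toEquiv
  have h2 : ∀ s q, WGood T c (Fin (s * (m + 1) + (m * (q + 1) + 1))) := by
    intro s q
    induction s with
    | zero => rw [Nat.zero_mul, Nat.zero_add]; exact h1 q
    | succ s ih =>
      have := ((h1 0).sum hm hT ih).equiv finSumFinEquiv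
      convert this using 2
      ring
  have e1 := Nat.div_add_mod (n - 1) m
  have e2 : (n - 1) % m < m := Nat.mod_lt _ (by omega)
  have e3 : m ≤ (n - 1) / m := by
    rw [Nat.le_div_iff_mul_le (by omega)]; omega
  obtain ⟨q, hq⟩ : ∃ q, (n - 1) / m = (n - 1) % m + q + 1 := ⟨(n-1)/m - (n-1)%m - 1, by omega⟩
  have := h2 ((n - 1) % m) q
  have hh : n = ((n - 1) % m) * (m + 1) + (m * (q + 1) + 1) := by
    rw [hq] at e1
    generalize (n - 1) % m = s at *
    have : n = n - 1 + 1 := by omega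
    rw [this, ← e1]
    ring
  rw [hh]
  exact this

theorem aux_repr {k : Type*} [Field k] {d : ℕ} (f : FreeAlgebra k (Fin d)) :
    ∃ (S : Finset (List (Fin d))) (c : List (Fin d) → k), (∀ w ∈ S, c w ≠ 0) ∧
      f = ∑ w ∈ S, c w • (w.map (FreeAlgebra.ι k)).prod := by
  have hb : ∀ w : FreeMonoid (Fin d), FreeAlgebra.basisFreeMonoid k (Fin d) w =
      ((FreeMonoid.toList w).map (FreeAlgebra.ι k)).prod := by
    intro w
    simp [FreeAlgebra.basisFreeMonoid, FreeAlgebra.equivMonoidAlgebraFreeMonoid, FreeMonoid.lift_apply]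
  let b := FreeAlgebra.basisFreeMonoid k (Fin d)
  refine ⟨(b.repr f).support, fun w => b.repr f w, fun w hw => Finsupp.mem_support_iff.1 hw, ?_⟩
  conv_lhs => rw [← b.linearCombination_repr f]
  rw [Finsupp.linearCombination_apply, Finsupp.sum]
  refine Finset.sum_congr rfl fun w _ => ?_
  rw [hb]
  rfl

open Polynomial in
theorem exists_value_with_distinct_eigenvalues
    (k : Type*) [Field k] [IsAlgClosed k] [CharZero k]
    (d : ℕ) (hd : 1 ≤ d) (f : FreeAlgebra k (Fin d))
    (hf : f ∉ Set.range (algebraMap k (FreeAlgebra k (Fin d)))) :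
    ∃ n₀ : ℕ, ∀ n : ℕ, n₀ ≤ n →
      ∃ X : Fin d → Matrix (Fin n) (Fin n) k,
        ∃ mu : Fin n → k, Function.Injective mu ∧
          ∀ i : Fin n, ∃ v : Fin n → k, v ≠ 0 ∧
            (ncEval X f).mulVec v = mu i • v := by
  classical
  obtain ⟨S, c, hc, hfS⟩ := aux_repr f
  have hev : ∀ {n : ℕ} (X : Fin d → Matrix (Fin n) (Fin n) k), ncEval X f = wEval S c X := by
    intro n X
    rw [ncEval, hfS, wEval, map_sum]
    refine Finset.sum_congr rfl fun w _ => ?_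
    rw [map_smul, map_list_prod, List.map_map]
    congr 3
    funext i
    simp
  -- a nonempty word occurs
  obtain ⟨w1, hw1, hw1l⟩ : ∃ w ∈ S, 1 ≤ w.length := by
    by_contra hcon
    push Not at hcon
    apply hf
    refine ⟨∑ w ∈ S, c w, ?_⟩
    rw [hfS, map_sum]
    refine Finset.sum_congr rfl fun w hw => ?_
    have : w = [] := List.eq_nil_of_length_eq_zero (by have := hcon w hw; omega)
    subst this
    simp [Algebra.algebraMap_eq_smul_one]
  obtain ⟨w0, hw0, hmax⟩ := S.exists_max_image List.length ⟨w1, hw1⟩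
  set m := w0.length with hm
  have hm1 : 1 ≤ m := hw1l.trans (hmax w1 hw1)
  set T := S.filter (fun w => w.length = m) with hTdef
  refine ⟨m * m + 1, fun n hn => ?_⟩
  obtain ⟨X, mu, hinj, -, hv⟩ := WGood.all (T := T) (c := c) hm1
    (fun w hw => (Finset.mem_filter.1 hw).2) (fun w hw => hc w (Finset.mem_filter.1 hw).1)
    ⟨w0, Finset.mem_filter.2 ⟨hw0, rfl⟩⟩ n hn
  have hsep : (wEval T c X).charpoly.Separable := (aux_sep_iff _).2 ⟨mu, hinj, hv⟩
  let F : Matrix (Fin n) (Fin n) k[X] := Matrix.of fun i j =>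
    ∑ w ∈ S, C (c w) * Polynomial.X ^ (m - w.length) * C ((w.map X).prod i j)
  have hF : ∀ s : k, F.map (evalRingHom s) =
      ∑ w ∈ S, (c w * s ^ (m - w.length)) • (w.map X).prod := by
    intro s
    ext i j
    simp only [F, Matrix.map_apply, Matrix.of_apply, Matrix.sum_apply, Matrix.smul_apply,
      coe_evalRingHom, eval_finsetSum, eval_mul, eval_pow, eval_X, eval_C, smul_eq_mul]
  have hF0 : F.map (evalRingHom (0:k)) = wEval T c X := by
    rw [hF, wEval, hTdef, Finset.sum_filter]
    refine Finset.sum_congr rfl fun w hw => ?_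
    have := hmax w hw
    split_ifs with h
    · simp [h]
    · rw [zero_pow (by omega)]; simp
  obtain ⟨s, hs0, hs⟩ := aux_perturb F (by rw [hF0]; exact hsep)
  obtain ⟨nu, hnu, hnv⟩ := (aux_sep_iff _).1 hs
  have hscale : ncEval (fun i => s⁻¹ • X i) f = (s⁻¹) ^ m • F.map (evalRingHom s) := by
    rw [hev, wEval_smul, hF, Finset.smul_sum]
    refine Finset.sum_congr rfl fun w hw => ?_
    rw [smul_smul]
    congr 1
    have := hmax w hw
    obtain ⟨r, hr⟩ := Nat.exists_eq_add_of_le this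
    rw [hr, Nat.add_sub_cancel_left, pow_add]
    have : s⁻¹ ^ r * s ^ r = 1 := by rw [← mul_pow, inv_mul_cancel₀ hs0, one_pow]
    linear_combination (-(c w * s⁻¹ ^ w.length)) * this
  refine ⟨fun i => s⁻¹ • X i, fun i => s⁻¹ ^ m * nu i, ?_, fun i => ?_⟩
  · intro a b hab
    exact hnu (mul_left_cancel₀ (pow_ne_zero m (inv_ne_zero hs0)) hab)
  · obtain ⟨v, hv0, hv⟩ := hnv i
    refine ⟨v, hv0, ?_⟩
    rw [hscale, Matrix.smul_mulVec, hv, smul_smul]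
end
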